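/- arXiv:quant-ph/0702007 — 9 statements merged into one kernel-verified Lean document; each statement's English description precedes it below -/
import Mathlib

section
/- (Rabi's formula.) For every real t, |c₁(t)|² = (γ²/Ω²)·sin²(Ω t); equivalently, the probability of finding the driven two-state system in its ground state at time t equals γ²/(γ² + (ω − ω₂₁)²/4) · sin²(Ω t). -/
open Complex Real

/-!
In frames rotating at the frequencies `(E₁ + E₂ ∓ ω) / 2` the driven equations become an autonomous
linear system whose matrix is traceless, so by Cayley–Hamilton its square is the scalar
`-(γ² + (ω - ω₂₁)² / 4) = -Ω²`. Hence the rotating amplitude of the first state is a harmonic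
oscillator of frequency `Ω` with initial position `0` and initial velocity `-iγ`, and a change of
rotating frame does not affect moduli.
-/

/-- The amplitude `e^{ipt} c(t)` of a state seen in a frame whose phase rotates at frequency `p`;
in suitable frames the driven system becomes autonomous. -/
noncomputable def rotatingFrame (p : ℝ) (c : ℝ → ℂ) (t : ℝ) : ℂ :=
  Complex.exp ((p * t : ℝ) * I) * c t

/-- The Schrödinger equation of a two-state system with energies `E₁`, `E₂` driven by a coupling of
strength `γ` and frequency `ω`, without initial conditions. Differentiability is a field because
`deriv` takes the value `0` where the derivative does not exist. -/
structure IsDrivenTwoStateSolution (E₁ E₂ γ ω : ℝ) (c₁ c₂ : ℝ → ℂ) : Prop where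
  differentiable_fst : Differentiable ℝ c₁
  differentiable_snd : Differentiable ℝ c₂
  deriv_fst (t : ℝ) :
    I * deriv c₁ t = (E₁ : ℂ) * c₁ t + (γ : ℂ) * Complex.exp (I * ω * t) * c₂ t
  deriv_snd (t : ℝ) :
    I * deriv c₂ t = (γ : ℂ) * Complex.exp (-(I * ω * t)) * c₁ t + (E₂ : ℂ) * c₂ t

theorem smul_eq_cos_smul_add_sin_smul_of_hasDerivAt {E : Type*} [NormedAddCommGroup E]
    [NormedSpace ℝ E] {Ω : ℝ} {x v : ℝ → E}
    (hx : ∀ t, HasDerivAt x (v t) t) (hv : ∀ t, HasDerivAt v (-(Ω ^ 2) • x t) t) (t : ℝ) :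
    Ω • x t = (Ω * Real.cos (Ω * t)) • x 0 + Real.sin (Ω * t) • v 0 := by
  have hcos (s : ℝ) : HasDerivAt (fun s ↦ Real.cos (Ω * s)) (-Real.sin (Ω * s) * Ω) s := by
    simpa using ((hasDerivAt_id s).const_mul Ω).cos
  have hsin (s : ℝ) : HasDerivAt (fun s ↦ Real.sin (Ω * s)) (Real.cos (Ω * s) * Ω) s := by
    simpa using ((hasDerivAt_id s).const_mul Ω).sin
  -- Rotating the phase-space point `(Ω x, v)` backwards by the angle `Ω s` brings it to rest.
  let X (s : ℝ) : E := Real.cos (Ω * s) • Ω • x s - Real.sin (Ω * s) • v s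
  let V (s : ℝ) : E := Real.sin (Ω * s) • Ω • x s + Real.cos (Ω * s) • v s
  have hX (s : ℝ) : HasDerivAt X 0 s :=
    (((hcos s).smul ((hx s).const_smul Ω)).sub ((hsin s).smul (hv s))).congr_deriv <| by
      rw [Pi.smul_apply]
      module
  have hV (s : ℝ) : HasDerivAt V 0 s :=
    (((hsin s).smul ((hx s).const_smul Ω)).add ((hcos s).smul (hv s))).congr_deriv <| by
      rw [Pi.smul_apply]
      module
  have hX_const : X t = Ω • x 0 := by
    simpa [X] using is_const_of_deriv_eq_zero (fun s ↦ (hX s).differentiableAt)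
      (fun s ↦ (hX s).deriv) t 0
  have hV_const : V t = v 0 := by
    simpa [V] using is_const_of_deriv_eq_zero (fun s ↦ (hV s).differentiableAt)
      (fun s ↦ (hV s).deriv) t 0
  calc
    Ω • x t = (Real.sin (Ω * t) ^ 2 + Real.cos (Ω * t) ^ 2) • Ω • x t := by
      rw [Real.sin_sq_add_cos_sq, one_smul]
    _ = Real.cos (Ω * t) • X t + Real.sin (Ω * t) • V t := by
      simp only [X, V]
      module
    _ = (Ω * Real.cos (Ω * t)) • x 0 + Real.sin (Ω * t) • v 0 := by
      rw [hX_const, hV_const]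
      module

theorem hasDerivAt_mul_add_mul_of_traceless {𝔸 : Type*} [NormedCommRing 𝔸] [NormedAlgebra ℝ 𝔸]
    {a b c : 𝔸} {x y : ℝ → 𝔸} {t : ℝ} (hx : HasDerivAt x (a * x t + b * y t) t)
    (hy : HasDerivAt y (c * x t - a * y t) t) :
    HasDerivAt (fun s ↦ a * x s + b * y s) ((a ^ 2 + b * c) * x t) t :=
  ((hx.const_mul a).add (hy.const_mul b)).congr_deriv (by ring)

@[simp]
theorem rotatingFrame_zero (p : ℝ) (c : ℝ → ℂ) : rotatingFrame p c 0 = c 0 := by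
  simp [rotatingFrame]

@[simp]
theorem norm_rotatingFrame (p : ℝ) (c : ℝ → ℂ) (t : ℝ) : ‖rotatingFrame p c t‖ = ‖c t‖ := by
  rw [rotatingFrame, norm_mul, norm_exp_ofReal_mul_I, one_mul]

theorem rotatingFrame_add (p q : ℝ) (c : ℝ → ℂ) (t : ℝ) :
    rotatingFrame (p + q) c t = rotatingFrame p (rotatingFrame q c) t := by
  simp only [rotatingFrame, ← mul_assoc, ← Complex.exp_add, ← add_mul, ← ofReal_add]

theorem hasDerivAt_rotatingFrame {c : ℝ → ℂ} {c' : ℂ} {t : ℝ} (p : ℝ)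
    (hc : HasDerivAt c c' t) :
    HasDerivAt (rotatingFrame p c)
      (I * p * rotatingFrame p c t + Complex.exp ((p * t : ℝ) * I) * c') t := by
  have hphase : HasDerivAt (fun s : ℝ ↦ ((p * s : ℝ) : ℂ) * I) (p * I) t := by
    simpa using ((hasDerivAt_id t).const_mul p).ofReal_comp.mul_const I
  exact (hphase.cexp.mul hc).congr_deriv (by rw [rotatingFrame]; ring)

namespace IsDrivenTwoStateSolution

variable {E₁ E₂ γ ω : ℝ} {c₁ c₂ : ℝ → ℂ}

theorem swap (h : IsDrivenTwoStateSolution E₁ E₂ γ ω c₁ c₂) :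
    IsDrivenTwoStateSolution E₂ E₁ γ (-ω) c₂ c₁ where
  differentiable_fst := h.differentiable_snd
  differentiable_snd := h.differentiable_fst
  deriv_fst t := by simpa [add_comm] using h.deriv_snd t
  deriv_snd t := by simpa [add_comm] using h.deriv_fst t

theorem hasDerivAt_fst (h : IsDrivenTwoStateSolution E₁ E₂ γ ω c₁ c₂) (t : ℝ) :
    HasDerivAt c₁ (-I * (E₁ * c₁ t + γ * rotatingFrame ω c₂ t)) t := by
  refine (h.differentiable_fst t).hasDerivAt.congr_deriv ?_
  have hphase : ((ω * t : ℝ) : ℂ) * I = I * ω * t := by push_cast; ring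
  rw [rotatingFrame, hphase, ← mul_assoc (γ : ℂ), ← h.deriv_fst t, ← mul_assoc, neg_mul, I_mul_I,
    neg_neg, one_mul]

theorem hasDerivAt_rotatingFrame_fst (h : IsDrivenTwoStateSolution E₁ E₂ γ ω c₁ c₂) (p t : ℝ) :
    HasDerivAt (rotatingFrame p c₁)
      (I * (p - E₁) * rotatingFrame p c₁ t + -I * γ * rotatingFrame (p + ω) c₂ t) t := by
  refine (hasDerivAt_rotatingFrame p (h.hasDerivAt_fst t)).congr_deriv ?_
  rw [rotatingFrame_add]
  simp only [rotatingFrame]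
  ring

theorem hasDerivAt_rotatingFrame_snd (h : IsDrivenTwoStateSolution E₁ E₂ γ ω c₁ c₂) (p t : ℝ) :
    HasDerivAt (rotatingFrame (p + ω) c₂)
      (-I * γ * rotatingFrame p c₁ t + I * (p + ω - E₂) * rotatingFrame (p + ω) c₂ t) t := by
  simpa [add_comm] using h.swap.hasDerivAt_rotatingFrame_fst (p + ω) t

theorem smul_rotatingFrame_fst (h : IsDrivenTwoStateSolution E₁ E₂ γ ω c₁ c₂) {Ω : ℝ}
    (hΩ : Ω ^ 2 = γ ^ 2 + (ω - (E₂ - E₁)) ^ 2 / 4) (t : ℝ) :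
    Ω • rotatingFrame ((E₁ + E₂ - ω) / 2) c₁ t =
      (Ω * Real.cos (Ω * t)) • c₁ 0 +
        Real.sin (Ω * t) • (I * ((E₂ - E₁ - ω) / 2) * c₁ 0 + -I * γ * c₂ 0) := by
  -- The frame frequency `p` is chosen so that `p - E₁` and `p + ω - E₂` are opposite.
  set p : ℝ := (E₁ + E₂ - ω) / 2 with hp
  set a : ℂ := I * ((E₂ - E₁ - ω) / 2) with ha
  have hfst (s : ℝ) : HasDerivAt (rotatingFrame p c₁)
      (a * rotatingFrame p c₁ s + -I * γ * rotatingFrame (p + ω) c₂ s) s :=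
    (h.hasDerivAt_rotatingFrame_fst p s).congr_deriv (by rw [ha, hp]; push_cast; ring)
  have hsnd (s : ℝ) : HasDerivAt (rotatingFrame (p + ω) c₂)
      (-I * γ * rotatingFrame p c₁ s - a * rotatingFrame (p + ω) c₂ s) s :=
    (h.hasDerivAt_rotatingFrame_snd p s).congr_deriv (by rw [ha, hp]; push_cast; ring)
  have hsq : a ^ 2 + -I * γ * (-I * γ) = -(Ω : ℂ) ^ 2 := by
    rw [ha, ← ofReal_pow, hΩ]
    push_cast
    linear_combination (((E₂ - E₁ - ω) / 2) ^ 2 + γ ^ 2 : ℂ) * I_sq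
  have hoscillator (s : ℝ) :
      HasDerivAt (fun s ↦ a * rotatingFrame p c₁ s + -I * γ * rotatingFrame (p + ω) c₂ s)
        (-(Ω ^ 2) • rotatingFrame p c₁ s) s :=
    (hasDerivAt_mul_add_mul_of_traceless (hfst s) (hsnd s)).congr_deriv (by rw [hsq]; simp)
  simpa using smul_eq_cos_smul_add_sin_smul_of_hasDerivAt hfst hoscillator t

end IsDrivenTwoStateSolution

/-- Rabi's formula for the driven two-state system: for every real `t`,
`|c₁(t)|² = (γ²/Ω²)·sin²(Ω t) = γ²/(γ² + (ω − ω₂₁)²/4)·sin²(Ω t)`. -/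
theorem rabi_formula
    (E₁ E₂ γ ω ω₂₁ Ω : ℝ)
    (hω₂₁ : ω₂₁ = E₂ - E₁)
    (hΩ : Ω = Real.sqrt (γ ^ 2 + (ω - ω₂₁) ^ 2 / 4))
    (hΩpos : 0 < Ω)
    (c₁ c₂ : ℝ → ℂ)
    (hc₁ : Differentiable ℝ c₁) (hc₂ : Differentiable ℝ c₂)
    (heq₁ : ∀ t : ℝ, Complex.I * deriv c₁ t =
      (E₁ : ℂ) * c₁ t + (γ : ℂ) * Complex.exp (Complex.I * ω * t) * c₂ t)
    (heq₂ : ∀ t : ℝ, Complex.I * deriv c₂ t =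
      (γ : ℂ) * Complex.exp (-(Complex.I * ω * t)) * c₁ t + (E₂ : ℂ) * c₂ t)
    (hinit₁ : c₁ 0 = 0) (hinit₂ : c₂ 0 = 1) :
    ∀ t : ℝ,
      ‖c₁ t‖ ^ 2 = (γ ^ 2 / Ω ^ 2) * Real.sin (Ω * t) ^ 2 ∧
      ‖c₁ t‖ ^ 2 =
        (γ ^ 2 / (γ ^ 2 + (ω - ω₂₁) ^ 2 / 4)) * Real.sin (Ω * t) ^ 2 := by
  have hΩsq : Ω ^ 2 = γ ^ 2 + (ω - ω₂₁) ^ 2 / 4 := by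
    rw [hΩ, Real.sq_sqrt (by positivity)]
  have hsol : IsDrivenTwoStateSolution E₁ E₂ γ ω c₁ c₂ := ⟨hc₁, hc₂, heq₁, heq₂⟩
  intro t
  rw [← hΩsq, and_self]
  have hamplitude := hsol.smul_rotatingFrame_fst (hω₂₁ ▸ hΩsq) t
  have hnorm : ‖c₁ t‖ = |γ * Real.sin (Ω * t)| / Ω := by
    rw [eq_div_iff hΩpos.ne']
    simpa [hinit₁, hinit₂, norm_smul, abs_mul, abs_of_pos hΩpos, mul_comm, -real_smul] using
      congrArg norm hamplitude
  rw [hnorm, div_pow, sq_abs, mul_pow, mul_div_right_comm]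
end

section
/- (Resonance oscillation.) If ω = ω₂₁, then for every real t, |c₁(t)|² = sin²(γ t); in particular, if γ ≠ 0, then for every natural number k, |c₁((2k+1)π/(2γ))|² = 1, i.e. at the times (2k+1)π/(2γ) the system is found in the ground state with probability 1. -/
open Complex Real

/-!
In the interaction picture `aⱼ(t) = e^{iEⱼt} cⱼ(t)` the free evolution disappears, and at resonance
the remaining phase `e^{i(ω - ω₂₁)t}` is constant, so `a₁' = -iγ a₂` and `a₂' = -iγ a₁`. The
normal modes `a₁ ± a₂` are then the exponentials `e^{∓iγt}`, whence
`a₁(t) = cos(γt) a₁(0) - i sin(γt) a₂(0)`.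
-/

lemma hasDerivAt_cexp_const_mul_ofReal (κ : ℂ) (t : ℝ) :
    HasDerivAt (fun s : ℝ ↦ Complex.exp (κ * s)) (Complex.exp (κ * t) * κ) t := by
  simpa using ((hasDerivAt_id t).ofReal_comp.const_mul κ).cexp

section LinearSystem

variable {E : Type*} [NormedAddCommGroup E] [NormedSpace ℂ E] {κ : ℂ} {f g : ℝ → E}

lemma eq_cexp_smul_of_hasDerivAt (hf : ∀ t, HasDerivAt f (κ • f t) t) (t : ℝ) :
    f t = Complex.exp (κ * t) • f 0 := by
  have hderiv (s : ℝ) : HasDerivAt (fun s : ℝ ↦ Complex.exp (-κ * s) • f s) 0 s :=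
    ((hasDerivAt_cexp_const_mul_ofReal (-κ) s).smul (hf s)).congr_deriv (by module)
  have hconst : Complex.exp (-κ * t) • f t = f 0 := by
    simpa using is_const_of_deriv_eq_zero (fun s ↦ (hderiv s).differentiableAt)
      (fun s ↦ (hderiv s).deriv) t 0
  rw [← hconst, smul_smul, ← Complex.exp_add, neg_mul, add_neg_cancel, Complex.exp_zero, one_smul]

lemma eq_cosh_smul_add_sinh_smul_of_hasDerivAt (hf : ∀ t, HasDerivAt f (κ • g t) t)
    (hg : ∀ t, HasDerivAt g (κ • f t) t) (t : ℝ) :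
    f t = Complex.cosh (κ * t) • f 0 + Complex.sinh (κ * t) • g 0 := by
  have hadd : f t + g t = Complex.exp (κ * t) • (f 0 + g 0) :=
    eq_cexp_smul_of_hasDerivAt (f := f + g)
      (fun s ↦ ((hf s).add (hg s)).congr_deriv (by simp only [Pi.add_apply]; module)) t
  have hsub : f t - g t = Complex.exp (-κ * t) • (f 0 - g 0) :=
    eq_cexp_smul_of_hasDerivAt (f := f - g)
      (fun s ↦ ((hf s).sub (hg s)).congr_deriv (by simp only [Pi.sub_apply]; module)) t
  calc f t = (1 / 2 : ℂ) • ((f t + g t) + (f t - g t)) := by module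
    _ = Complex.cosh (κ * t) • f 0 + Complex.sinh (κ * t) • g 0 := by
      rw [hadd, hsub, neg_mul, Complex.cosh, Complex.sinh]
      module

end LinearSystem

/-- The amplitude `c` of a level of energy `E` in the interaction picture, i.e. with the phase
`e^{-iEt}` of the free evolution removed. -/
noncomputable def interactionPicture (E : ℂ) (c : ℝ → ℂ) (t : ℝ) : ℂ :=
  Complex.exp (I * E * t) * c t

lemma interactionPicture_zero (E : ℂ) (c : ℝ → ℂ) : interactionPicture E c 0 = c 0 := by
  simp [interactionPicture]

lemma norm_interactionPicture (E : ℝ) (c : ℝ → ℂ) (t : ℝ) :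
    ‖interactionPicture E c t‖ = ‖c t‖ := by
  rw [interactionPicture, norm_mul, mul_assoc, ← ofReal_mul, norm_exp_I_mul_ofReal, one_mul]

lemma hasDerivAt_interactionPicture {E f : ℂ} {c : ℝ → ℂ} {t : ℝ} (hc : DifferentiableAt ℝ c t)
    (heq : I * deriv c t = E * c t + f) :
    HasDerivAt (interactionPicture E c) (-I * (Complex.exp (I * E * t) * f)) t := by
  refine ((hasDerivAt_cexp_const_mul_ofReal (I * E) t).mul hc.hasDerivAt).congr_deriv ?_
  linear_combination -I * Complex.exp (I * E * t) * heq +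
    Complex.exp (I * E * t) * deriv c t * I_mul_I

/-- The amplitudes `c₁`, `c₂` of a two-state system with energies `E₁`, `E₂`, coupled with strength
`γ` by a drive of frequency `ω`. The initial values are left free, and the parameters may be
complex. -/
structure IsDrivenTwoStateSolution_s2 (E₁ E₂ γ ω : ℂ) (c₁ c₂ : ℝ → ℂ) : Prop where
  differentiable_fst : Differentiable ℝ c₁
  differentiable_snd : Differentiable ℝ c₂
  eq_fst (t : ℝ) : I * deriv c₁ t = E₁ * c₁ t + γ * Complex.exp (I * ω * t) * c₂ t
  eq_snd (t : ℝ) : I * deriv c₂ t = γ * Complex.exp (-(I * ω * t)) * c₁ t + E₂ * c₂ t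

namespace IsDrivenTwoStateSolution_s2

variable {E₁ E₂ γ ω : ℂ} {c₁ c₂ : ℝ → ℂ}

lemma symm (h : IsDrivenTwoStateSolution_s2 E₁ E₂ γ ω c₁ c₂) :
    IsDrivenTwoStateSolution_s2 E₂ E₁ γ (-ω) c₂ c₁ where
  differentiable_fst := h.differentiable_snd
  differentiable_snd := h.differentiable_fst
  eq_fst t := by rw [h.eq_snd, mul_neg, neg_mul, add_comm]
  eq_snd t := by rw [h.eq_fst, mul_neg, neg_mul, neg_neg, add_comm]

lemma hasDerivAt_interactionPicture_fst (h : IsDrivenTwoStateSolution_s2 E₁ E₂ γ ω c₁ c₂) (t : ℝ) :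
    HasDerivAt (interactionPicture E₁ c₁)
      (-I * γ * Complex.exp (I * (ω - (E₂ - E₁)) * t) * interactionPicture E₂ c₂ t) t := by
  refine (hasDerivAt_interactionPicture (h.differentiable_fst t)
    ((h.eq_fst t).trans (by rw [mul_assoc]))).congr_deriv ?_
  have hphase : Complex.exp (I * E₁ * t) * Complex.exp (I * ω * t) =
      Complex.exp (I * (ω - (E₂ - E₁)) * t) * Complex.exp (I * E₂ * t) := by
    rw [← Complex.exp_add, ← Complex.exp_add]
    ring_nf
  rw [interactionPicture]
  linear_combination -I * γ * c₂ t * hphase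

lemma hasDerivAt_interactionPicture_fst_of_resonant
    (h : IsDrivenTwoStateSolution_s2 E₁ E₂ γ (E₂ - E₁) c₁ c₂) (t : ℝ) :
    HasDerivAt (interactionPicture E₁ c₁) (-I * γ * interactionPicture E₂ c₂ t) t := by
  simpa using h.hasDerivAt_interactionPicture_fst t

lemma interactionPicture_fst_of_resonant
    (h : IsDrivenTwoStateSolution_s2 E₁ E₂ γ (E₂ - E₁) c₁ c₂) (t : ℝ) :
    interactionPicture E₁ c₁ t =
      Complex.cos (γ * t) * c₁ 0 - I * Complex.sin (γ * t) * c₂ 0 := by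
  have hswap : IsDrivenTwoStateSolution_s2 E₂ E₁ γ (E₁ - E₂) c₂ c₁ := by
    simpa only [neg_sub] using h.symm
  have hsol := eq_cosh_smul_add_sinh_smul_of_hasDerivAt
    h.hasDerivAt_interactionPicture_fst_of_resonant
    hswap.hasDerivAt_interactionPicture_fst_of_resonant t
  have harg : -I * γ * t = -(γ * t) * I := by ring
  rw [hsol, harg, Complex.cosh_mul_I, Complex.sinh_mul_I, Complex.cos_neg, Complex.sin_neg,
    interactionPicture_zero, interactionPicture_zero, smul_eq_mul, smul_eq_mul]
  ring

end IsDrivenTwoStateSolution_s2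

theorem resonance_oscillation_general {E₁ γ : ℝ} {E₂ : ℂ} {c₁ c₂ : ℝ → ℂ}
    (h : IsDrivenTwoStateSolution_s2 E₁ E₂ γ (E₂ - E₁) c₁ c₂) :
    (∀ t : ℝ, ‖c₁ t‖ = ‖Real.cos (γ * t) * c₁ 0 - I * Real.sin (γ * t) * c₂ 0‖) ∧
    (γ ≠ 0 → ∀ k : ℕ, ‖c₁ ((2 * (k : ℝ) + 1) * π / (2 * γ))‖ = ‖c₂ 0‖) := by
  have hnorm (t : ℝ) : ‖c₁ t‖ = ‖Real.cos (γ * t) * c₁ 0 - I * Real.sin (γ * t) * c₂ 0‖ := by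
    rw [← norm_interactionPicture E₁, h.interactionPicture_fst_of_resonant]
    push_cast
    rfl
  refine ⟨hnorm, fun hγ k ↦ ?_⟩
  have hangle : γ * ((2 * k + 1) * π / (2 * γ)) = (2 * k + 1) * π / 2 := by field_simp
  have hcos : Real.cos ((2 * k + 1) * π / 2) = 0 := Real.cos_eq_zero_iff.2 ⟨k, by push_cast; rfl⟩
  have hsin : |Real.sin ((2 * k + 1) * π / 2)| = 1 :=
    Real.abs_sin_eq_one_iff.2 ⟨k, by push_cast; ring⟩
  rw [hnorm, hangle, hcos, ofReal_zero, zero_mul, zero_sub, norm_neg, norm_mul, norm_mul, norm_I,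
    norm_real, Real.norm_eq_abs, hsin, one_mul, one_mul]

/-- Resonance oscillation: if `ω = ω₂₁`, then `|c₁(t)|² = sin²(γ t)` for all `t`;
in particular, if `γ ≠ 0`, then `|c₁((2k+1)π/(2γ))|² = 1` for every natural `k`. -/
theorem resonance_oscillation
    (E₁ E₂ γ ω ω₂₁ : ℝ)
    (hω₂₁ : ω₂₁ = E₂ - E₁)
    (hres : ω = ω₂₁)
    (c₁ c₂ : ℝ → ℂ)
    (hc₁ : Differentiable ℝ c₁) (hc₂ : Differentiable ℝ c₂)
    (heq₁ : ∀ t : ℝ, Complex.I * deriv c₁ t =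
      (E₁ : ℂ) * c₁ t + (γ : ℂ) * Complex.exp (Complex.I * ω * t) * c₂ t)
    (heq₂ : ∀ t : ℝ, Complex.I * deriv c₂ t =
      (γ : ℂ) * Complex.exp (-(Complex.I * ω * t)) * c₁ t + (E₂ : ℂ) * c₂ t)
    (hinit₁ : c₁ 0 = 0) (hinit₂ : c₂ 0 = 1) :
    (∀ t : ℝ, ‖c₁ t‖ ^ 2 = Real.sin (γ * t) ^ 2) ∧
    (γ ≠ 0 → ∀ k : ℕ,
      ‖c₁ ((2 * (k : ℝ) + 1) * Real.pi / (2 * γ))‖ ^ 2 = 1) := by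
  subst hω₂₁ hres
  have hsol : IsDrivenTwoStateSolution_s2 E₁ E₂ γ (E₂ - E₁) c₁ c₂ :=
    ⟨hc₁, hc₂, by simpa using heq₁, by simpa using heq₂⟩
  obtain ⟨hnorm, hpeak⟩ := resonance_oscillation_general hsol
  exact ⟨fun t ↦ by simp [hnorm t, hinit₁, hinit₂, -ofReal_sin, norm_real],
    fun hγ k ↦ by rw [hpeak hγ k, hinit₂, norm_one, one_pow]⟩
end

section
/- (Peak and period of the Rabi oscillation.) The supremum over t ∈ ℝ of |c₁(t)|² equals γ²/Ω² = γ²/(γ² + (ω − ω₂₁)²/4), and this supremum is attained at t = π/(2Ω); moreover the function t ↦ |c₁(t)|² is periodic with period π/Ω. -/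
/-!
In the rotating frame `u = e^{iμt} c₁`, `v = e^{i(μ+ω)t} c₂` the system has constant coefficients,
and `μ = (E₁ + E₂ - ω) / 2` makes its matrix traceless, hence with square `Ω²`. So `u` is a
harmonic oscillator of frequency `Ω` with initial position `0` and initial velocity `-iγ`, that is,
`u t = -i (γ / Ω) sin (Ω t)`, and the rotating phase does not change `‖c₁ t‖`.
-/

open Complex Real

section Oscillator

variable {E : Type*} [NormedAddCommGroup E] [NormedSpace ℝ E]

theorem smul_eq_of_harmonic_oscillator {W : ℝ} {x p : ℝ → E}
    (hx : ∀ t, HasDerivAt x (p t) t) (hp : ∀ t, HasDerivAt p (-W ^ 2 • x t) t) (t : ℝ) :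
    W • x t = (W * Real.cos (W * t)) • x 0 + Real.sin (W * t) • p 0 := by
  -- Evolving the state at time `s` freely up to time `t` gives a result independent of `s`.
  let F : ℝ → E := fun s =>
    (W * Real.cos (W * (t - s))) • x s + Real.sin (W * (t - s)) • p s
  have hF : ∀ s, HasDerivAt F 0 s := fun s => by
    have hphase : HasDerivAt (fun s => W * (t - s)) (-W) s := by
      simpa using ((hasDerivAt_id s).const_sub t).const_mul W
    refine (((hphase.cos.const_mul W).smul (hx s)).add (hphase.sin.smul (hp s))).congr_deriv ?_
    module
  have hconst : F t = F 0 :=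
    is_const_of_deriv_eq_zero (fun s => (hF s).differentiableAt) (fun s => (hF s).deriv) t 0
  simpa [F] using hconst

end Oscillator

theorem mul_eq_of_traceless_system {W : ℝ} {a b c : ℂ} (hW : (W : ℂ) ^ 2 = a ^ 2 + b * c)
    {u v : ℝ → ℂ} (hu : ∀ t, HasDerivAt u (-I * (a * u t + b * v t)) t)
    (hv : ∀ t, HasDerivAt v (-I * (c * u t - a * v t)) t) (t : ℝ) :
    W * u t = W * Real.cos (W * t) * u 0 - I * Real.sin (W * t) * (a * u 0 + b * v 0) := by
  have hu' (t : ℝ) :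
      HasDerivAt (fun t => -I * (a * u t + b * v t)) (-W ^ 2 • u t) t := by
    refine ((((hu t).const_mul a).add ((hv t).const_mul b)).const_mul (-I)).congr_deriv ?_
    rw [real_smul]
    push_cast
    linear_combination (a ^ 2 + b * c) * u t * I_sq + u t * hW
  have h := smul_eq_of_harmonic_oscillator hu hu' t
  simp only [real_smul, ofReal_mul] at h
  linear_combination h

theorem hasDerivAt_cexp_I_mul_ofReal (ν : ℂ) (t : ℝ) :
    HasDerivAt (fun t : ℝ => cexp (I * ν * t)) (cexp (I * ν * t) * (I * ν)) t := by
  simpa using ((hasDerivAt_id t).ofReal_comp.const_mul (I * ν)).cexp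

/-- The amplitudes `c₁`, `c₂` of a two-state system with energies `E₁`, `E₂`, driven with coupling
`γ` at frequency `ω`, obey the Schrödinger equation. The equation is solved for the derivatives, and
no initial condition is imposed. -/
structure IsDrivenTwoStateEvolution (E₁ E₂ γ ω : ℝ) (c₁ c₂ : ℝ → ℂ) : Prop where
  hasDerivAt_fst : ∀ t : ℝ, HasDerivAt c₁ (-I * (E₁ * c₁ t + γ * cexp (I * ω * t) * c₂ t)) t
  hasDerivAt_snd : ∀ t : ℝ, HasDerivAt c₂ (-I * (γ * cexp (-(I * ω * t)) * c₁ t + E₂ * c₂ t)) t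

namespace IsDrivenTwoStateEvolution

variable {E₁ E₂ γ ω : ℝ} {c₁ c₂ : ℝ → ℂ}

theorem of_I_mul_deriv (hc₁ : Differentiable ℝ c₁) (hc₂ : Differentiable ℝ c₂)
    (heq₁ : ∀ t : ℝ, I * deriv c₁ t = E₁ * c₁ t + γ * cexp (I * ω * t) * c₂ t)
    (heq₂ : ∀ t : ℝ, I * deriv c₂ t = γ * cexp (-(I * ω * t)) * c₁ t + E₂ * c₂ t) :
    IsDrivenTwoStateEvolution E₁ E₂ γ ω c₁ c₂ where
  hasDerivAt_fst t := (hc₁ t).hasDerivAt.congr_deriv <| by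
    rw [← heq₁ t, ← mul_assoc, neg_mul, I_mul_I, neg_neg, one_mul]
  hasDerivAt_snd t := (hc₂ t).hasDerivAt.congr_deriv <| by
    rw [← heq₂ t, ← mul_assoc, neg_mul, I_mul_I, neg_neg, one_mul]

theorem hasDerivAt_rotating_fst (h : IsDrivenTwoStateEvolution E₁ E₂ γ ω c₁ c₂) (μ : ℂ) (t : ℝ) :
    HasDerivAt (fun t : ℝ => cexp (I * μ * t) * c₁ t)
      (-I * ((E₁ - μ) * (cexp (I * μ * t) * c₁ t) + γ * (cexp (I * (μ + ω) * t) * c₂ t))) t := by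
  have hexp : cexp (I * (μ + ω) * t) = cexp (I * μ * t) * cexp (I * ω * t) := by
    rw [← Complex.exp_add]
    ring_nf
  refine ((hasDerivAt_cexp_I_mul_ofReal μ t).mul (h.hasDerivAt_fst t)).congr_deriv ?_
  rw [hexp]
  ring

theorem hasDerivAt_rotating_snd (h : IsDrivenTwoStateEvolution E₁ E₂ γ ω c₁ c₂) (μ : ℂ) (t : ℝ) :
    HasDerivAt (fun t : ℝ => cexp (I * (μ + ω) * t) * c₂ t)
      (-I * (γ * (cexp (I * μ * t) * c₁ t) +
        (E₂ - (μ + ω)) * (cexp (I * (μ + ω) * t) * c₂ t))) t := by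
  have hexp : cexp (I * μ * t) = cexp (I * (μ + ω) * t) * cexp (-(I * ω * t)) := by
    rw [← Complex.exp_add]
    ring_nf
  refine ((hasDerivAt_cexp_I_mul_ofReal (μ + ω) t).mul (h.hasDerivAt_snd t)).congr_deriv ?_
  rw [hexp]
  ring

theorem norm_fst_sq_eq (h : IsDrivenTwoStateEvolution E₁ E₂ γ ω c₁ c₂) (hc₁ : c₁ 0 = 0)
    {Ω : ℝ} (hΩ₀ : Ω ≠ 0) (hΩ : Ω ^ 2 = γ ^ 2 + (ω - (E₂ - E₁)) ^ 2 / 4) (t : ℝ) :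
    ‖c₁ t‖ ^ 2 = γ ^ 2 / Ω ^ 2 * ‖c₂ 0‖ ^ 2 * Real.sin (Ω * t) ^ 2 := by
  let μ : ℝ := (E₁ + E₂ - ω) / 2
  have hdet : (Ω : ℂ) ^ 2 = (E₁ - μ) ^ 2 + γ * γ := by
    have hreal : Ω ^ 2 = (E₁ - μ) ^ 2 + γ * γ := by rw [hΩ]; ring
    exact_mod_cast hreal
  have htrace : (E₂ - (μ + ω) : ℂ) = -(E₁ - μ) := by
    push_cast [μ]
    ring
  have hv (t : ℝ) := h.hasDerivAt_rotating_snd μ t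
  simp only [htrace, neg_mul (_ - _ : ℂ), ← sub_eq_add_neg] at hv
  have hsol : Ω * (cexp (I * μ * t) * c₁ t) = -(I * Real.sin (Ω * t) * (γ * c₂ 0)) := by
    simpa [hc₁] using mul_eq_of_traceless_system hdet (h.hasDerivAt_rotating_fst μ) hv t
  have hphase : ‖cexp (I * μ * t)‖ = 1 := by
    rw [mul_assoc, ← ofReal_mul, norm_exp_I_mul_ofReal]
  have hnorm : |Ω| * ‖c₁ t‖ = |Real.sin (Ω * t)| * (|γ| * ‖c₂ 0‖) := by
    simpa only [norm_mul, norm_neg, norm_I, hphase, norm_real, Real.norm_eq_abs, one_mul]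
      using congrArg norm hsol
  have hsq : Ω ^ 2 * ‖c₁ t‖ ^ 2 = Real.sin (Ω * t) ^ 2 * (γ ^ 2 * ‖c₂ 0‖ ^ 2) := by
    simp only [← sq_abs Ω, ← sq_abs γ, ← sq_abs (Real.sin _), ← mul_pow, hnorm]
  field_simp
  linear_combination hsq

end IsDrivenTwoStateEvolution

section SinSq

variable {W : ℝ}

theorem sin_sq_mul_pi_div_two_mul (hW : W ≠ 0) : Real.sin (W * (π / (2 * W))) ^ 2 = 1 := by
  rw [show W * (π / (2 * W)) = π / 2 by field_simp, Real.sin_pi_div_two, one_pow]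

theorem isGreatest_range_mul_sin_sq {A : ℝ} (hA : 0 ≤ A) (hW : W ≠ 0) :
    IsGreatest (Set.range fun t => A * Real.sin (W * t) ^ 2) A := by
  refine ⟨⟨π / (2 * W), ?_⟩, ?_⟩
  · simp only [sin_sq_mul_pi_div_two_mul hW, mul_one]
  · rintro _ ⟨t, rfl⟩
    exact mul_le_of_le_one_right hA (Real.sin_sq_le_one _)

theorem periodic_mul_sin_sq (A : ℝ) (hW : W ≠ 0) :
    Function.Periodic (fun t => A * Real.sin (W * t) ^ 2) (π / W) := fun t => by
  simp only [mul_add, mul_div_cancel₀ π hW, Real.sin_add_pi, neg_sq]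

end SinSq

/-- Peak and period of the Rabi oscillation: the supremum over `t` of `|c₁(t)|²`
equals `γ²/Ω² = γ²/(γ² + (ω − ω₂₁)²/4)`, attained at `t = π/(2Ω)`, and
`t ↦ |c₁(t)|²` is periodic with period `π/Ω`. -/
theorem rabi_peak_and_period
    (E₁ E₂ γ ω ω₂₁ Ω : ℝ)
    (hω₂₁ : ω₂₁ = E₂ - E₁)
    (hΩ : Ω = Real.sqrt (γ ^ 2 + (ω - ω₂₁) ^ 2 / 4))
    (hΩpos : 0 < Ω)
    (c₁ c₂ : ℝ → ℂ)
    (hc₁ : Differentiable ℝ c₁) (hc₂ : Differentiable ℝ c₂)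
    (heq₁ : ∀ t : ℝ, Complex.I * deriv c₁ t =
      (E₁ : ℂ) * c₁ t + (γ : ℂ) * Complex.exp (Complex.I * ω * t) * c₂ t)
    (heq₂ : ∀ t : ℝ, Complex.I * deriv c₂ t =
      (γ : ℂ) * Complex.exp (-(Complex.I * ω * t)) * c₁ t + (E₂ : ℂ) * c₂ t)
    (hinit₁ : c₁ 0 = 0) (hinit₂ : c₂ 0 = 1) :
    (⨆ t : ℝ, ‖c₁ t‖ ^ 2) = γ ^ 2 / Ω ^ 2 ∧
    γ ^ 2 / Ω ^ 2 = γ ^ 2 / (γ ^ 2 + (ω - ω₂₁) ^ 2 / 4) ∧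
    ‖c₁ (Real.pi / (2 * Ω))‖ ^ 2 = γ ^ 2 / Ω ^ 2 ∧
    Function.Periodic (fun t : ℝ => ‖c₁ t‖ ^ 2) (Real.pi / Ω) := by
  have hΩsq : Ω ^ 2 = γ ^ 2 + (ω - ω₂₁) ^ 2 / 4 := by
    rw [hΩ, Real.sq_sqrt (by positivity)]
  have hevol : IsDrivenTwoStateEvolution E₁ E₂ γ ω c₁ c₂ := .of_I_mul_deriv hc₁ hc₂ heq₁ heq₂
  have hrabi (t : ℝ) : ‖c₁ t‖ ^ 2 = γ ^ 2 / Ω ^ 2 * Real.sin (Ω * t) ^ 2 := by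
    simpa [hinit₂] using hevol.norm_fst_sq_eq hinit₁ hΩpos.ne' (hω₂₁ ▸ hΩsq) t
  simp only [hrabi]
  refine ⟨(isGreatest_range_mul_sin_sq (by positivity) hΩpos.ne').csSup_eq, by rw [hΩsq], ?_,
    periodic_mul_sin_sq _ hΩpos.ne'⟩
  rw [sin_sq_mul_pi_div_two_mul hΩpos.ne', mul_one]
end

section
/- (Symmetry reduction for Algorithm 1.) For every Algorithm-1 solution, and for all indices p, q with 3 ≤ p ≤ N and 3 ≤ q ≤ N, one has c_p(t) = c_q(t) for all t ∈ ℝ; that is, the N first-order equations reduce to three independent amplitudes c₁, c₂, c₃. -/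
open Complex Real Finset

/-- The perturbation matrix entry `⟨p|V_{[2,γ,ω]}(t)|q⟩` of Algorithm 1
(with initial state `j = 2`). -/
noncomputable def V1 (γ ω : ℝ) (p q : ℕ) (t : ℝ) : ℂ :=
  if q = 2 ∧ p ≠ 2 then (γ : ℂ) * Complex.exp (Complex.I * ω * t)
  else if p = 2 ∧ q ≠ 2 then (γ : ℂ) * Complex.exp (-(Complex.I * ω * t))
  else 0

/-!
Levels of equal energy with the same couplings satisfy the same affine equation: the sum over all
amplitudes, although it contains the two amplitudes being compared, may be treated as a given
source term. Uniqueness for a scalar linear equation then suffices.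
-/

theorem V1_row_eq {γ ω : ℝ} {p q : ℕ} (hp : p ≠ 2) (hq : q ≠ 2) (k : ℕ) (t : ℝ) :
    V1 γ ω p k t = V1 γ ω q k t := by
  simp [V1, hp, hq]

theorem eq_of_hasDerivAt_clm_apply_add {F : Type*} [NormedAddCommGroup F] [NormedSpace ℝ F]
    {A : F →L[ℝ] F} {g u v : ℝ → F} {t₀ : ℝ}
    (hu : ∀ t, HasDerivAt u (A (u t) + g t) t) (hv : ∀ t, HasDerivAt v (A (v t) + g t) t)
    (h₀ : u t₀ = v t₀) : u = v := by
  have hlip (t : ℝ) : LipschitzWith ‖A‖₊ (fun x ↦ A x + g t) := by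
    simpa only [add_zero] using A.lipschitz.add (LipschitzWith.const (g t))
  exact ODE_solution_unique_univ (s := fun _ ↦ Set.univ) (fun t ↦ (hlip t).lipschitzOnWith)
    (fun t ↦ ⟨hu t, Set.mem_univ _⟩) (fun t ↦ ⟨hv t, Set.mem_univ _⟩) h₀

theorem eq_of_I_smul_deriv_eq_clm_apply_add {F : Type*} [NormedAddCommGroup F] [NormedSpace ℂ F]
    {H : F →L[ℂ] F} {g u v : ℝ → F} {t₀ : ℝ}
    (hu : Differentiable ℝ u) (hv : Differentiable ℝ v)
    (hu' : ∀ t, I • deriv u t = H (u t) + g t) (hv' : ∀ t, I • deriv v t = H (v t) + g t)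
    (h₀ : u t₀ = v t₀) : u = v := by
  have hasDerivAt_of_eq {w : ℝ → F} (hw : Differentiable ℝ w)
      (hw' : ∀ t, I • deriv w t = H (w t) + g t) (t : ℝ) :
      HasDerivAt w ((-I • H).restrictScalars ℝ (w t) + -I • g t) t := by
    refine (hw t).hasDerivAt.congr_deriv ?_
    calc deriv w t = -I • I • deriv w t := by simp [smul_smul]
      _ = -I • (H (w t) + g t) := by rw [hw' t]
      _ = (-I • H).restrictScalars ℝ (w t) + -I • g t := smul_add _ _ _
  exact eq_of_hasDerivAt_clm_apply_add (hasDerivAt_of_eq hu hu') (hasDerivAt_of_eq hv hv') h₀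

theorem algorithm1_symmetry_reduction_general {ι : Type*} {s : Finset ι} {e : ι → ℂ}
    {V : ι → ι → ℝ → ℂ} {c : ι → ℝ → ℂ} {p q : ι} {t₀ : ℝ}
    (he : e p = e q) (hV : ∀ k ∈ s, ∀ t, V p k t = V q k t)
    (hp : Differentiable ℝ (c p)) (hq : Differentiable ℝ (c q))
    (hp' : ∀ t, I * deriv (c p) t = e p * c p t + ∑ k ∈ s, V p k t * c k t)
    (hq' : ∀ t, I * deriv (c q) t = e q * c q t + ∑ k ∈ s, V q k t * c k t)
    (h₀ : c p t₀ = c q t₀) (t : ℝ) : c p t = c q t := by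
  have source_eq (t : ℝ) : ∑ k ∈ s, V p k t * c k t = ∑ k ∈ s, V q k t * c k t :=
    Finset.sum_congr rfl fun k hk ↦ by rw [hV k hk t]
  simp only [he, source_eq] at hp'
  exact congrFun (eq_of_I_smul_deriv_eq_clm_apply_add (H := e q • .id ℂ ℂ) hp hq hp' hq' h₀) t

/-- Symmetry reduction for Algorithm 1: for every Algorithm-1 solution and all
indices `p, q` with `3 ≤ p ≤ N` and `3 ≤ q ≤ N`, one has `c_p(t) = c_q(t)` for
all `t`. -/
theorem algorithm1_symmetry_reduction
    (N : ℕ) (hN : 3 ≤ N) (E γ ω : ℝ) (hE : 0 < E)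
    (c : ℕ → ℝ → ℂ)
    (hdiff : ∀ p, Differentiable ℝ (c p))
    (heq : ∀ p, 1 ≤ p → p ≤ N → ∀ t : ℝ,
      Complex.I * deriv (c p) t =
        ((if p = 1 then (0 : ℝ) else E) : ℂ) * c p t +
          ∑ q ∈ Finset.Icc 1 N, V1 γ ω p q t * c q t)
    (hinit₂ : c 2 0 = 1)
    (hinit : ∀ p, p ≠ 2 → c p 0 = 0) :
    ∀ p q, 3 ≤ p → p ≤ N → 3 ≤ q → q ≤ N → ∀ t : ℝ, c p t = c q t := by
  intro p q hp hpN hq hqN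
  exact algorithm1_symmetry_reduction_general (e := fun r ↦ if r = 1 then (0 : ℝ) else E)
    (by grind) (fun k _ ↦ V1_row_eq (by lia) (by lia) k) (hdiff p) (hdiff q)
    (heq p (by lia) hpN) (heq q (by lia) hqN) ((hinit p (by lia)).trans (hinit q (by lia)).symm)
end

section
/- (Symmetry reduction for Algorithm 2.) For every Algorithm-2 solution: for all odd indices p, q with 3 ≤ p, q ≤ N−1, c_p(t) = c_q(t) for all t ∈ ℝ, and for all even indices p, q with 4 ≤ p, q ≤ N, c_p(t) = c_q(t) for all t ∈ ℝ; that is, the N first-order equations reduce to four independent amplitudes c₁, c₂, c₃, c₄. -/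
open Complex Real Finset

/-- The perturbation matrix entry `⟨p|V^o_{[2,γ,ω]}(t)|q⟩` of Algorithm 2
(with initial state `j = 2`). -/
noncomputable def V2o (γ ω : ℝ) (p q : ℕ) (t : ℝ) : ℂ :=
  if (p = 2 ∧ q ≠ 2 ∧ Even q) ∨ (q = 2 ∧ p ≠ 2 ∧ Odd p) then
    (γ : ℂ) * Complex.exp (Complex.I * ω * t)
  else if (q = 2 ∧ p ≠ 2 ∧ Even p) ∨ (p = 2 ∧ q ≠ 2 ∧ Odd q) then
    (γ : ℂ) * Complex.exp (-(Complex.I * ω * t))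
  else 0

/-!
Rows `p, q ≠ 2` of the perturbation matrix coincide when `p` and `q` have the same parity.
Regarding all the amplitudes in the coupling term as known functions of time, `c p` and `c q`
therefore solve one and the same scalar affine equation `i x' = ε x + f(t)` as soon as their
energies agree, and uniqueness for Lipschitz ODEs identifies them if their initial values agree.
-/

theorem eq_of_hasDerivAt_affine {F : Type*} [NormedAddCommGroup F] [NormedSpace ℝ F]
    (A : F →L[ℝ] F) {f x y : ℝ → F} {t₀ : ℝ}
    (hx : ∀ t, HasDerivAt x (A (x t) + f t) t) (hy : ∀ t, HasDerivAt y (A (y t) + f t) t)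
    (h₀ : x t₀ = y t₀) : x = y :=
  ODE_solution_unique_univ (v := fun t z => A z + f t) (s := fun _ => Set.univ)
    (fun t => (A.lipschitz.add (LipschitzWith.const (f t))).lipschitzOnWith)
    (fun t => ⟨hx t, Set.mem_univ _⟩) (fun t => ⟨hy t, Set.mem_univ _⟩) h₀

theorem eq_of_I_mul_deriv_eq {a : ℂ} {f x y : ℝ → ℂ} {t₀ : ℝ}
    (hx : Differentiable ℝ x) (hy : Differentiable ℝ y)
    (hx' : ∀ t, I * deriv x t = a * x t + f t) (hy' : ∀ t, I * deriv y t = a * y t + f t)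
    (h₀ : x t₀ = y t₀) : x = y := by
  have hasDerivAt_of_eq {z : ℝ → ℂ} (hz : Differentiable ℝ z)
      (hz' : ∀ t, I * deriv z t = a * z t + f t) (t : ℝ) :
      HasDerivAt z (ContinuousLinearMap.mul ℝ ℂ (-I * a) (z t) + -I * f t) t := by
    refine (hz t).hasDerivAt.congr_deriv ?_
    rw [ContinuousLinearMap.mul_apply']
    linear_combination -I * hz' t + deriv z t * I_mul_I
  exact eq_of_hasDerivAt_affine _ (hasDerivAt_of_eq hx hx') (hasDerivAt_of_eq hy hy') h₀

theorem V2o_congr_left {p q : ℕ} (hp : p ≠ 2) (hq : q ≠ 2) (hpq : Even p ↔ Even q) (γ ω : ℝ) :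
    V2o γ ω p = V2o γ ω q := by
  ext r t
  simp only [V2o, ne_eq, hp, hq, ← Nat.not_even_iff_odd, hpq]

theorem algorithm2_symmetry_reduction_general {N : ℕ} {γ ω : ℝ} {ε : ℕ → ℂ} {c : ℕ → ℝ → ℂ}
    (hdiff : ∀ p ∈ Finset.Icc 1 N, Differentiable ℝ (c p))
    (heq : ∀ p ∈ Finset.Icc 1 N, ∀ t : ℝ,
      I * deriv (c p) t = ε p * c p t + ∑ q ∈ Finset.Icc 1 N, V2o γ ω p q t * c q t)
    {p q : ℕ} (hp : p ∈ Finset.Icc 1 N) (hq : q ∈ Finset.Icc 1 N) (hp2 : p ≠ 2) (hq2 : q ≠ 2)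
    (hpq : Even p ↔ Even q) (hε : ε p = ε q) {t₀ : ℝ} (h₀ : c p t₀ = c q t₀) : c p = c q := by
  have hq' := heq q hq
  rw [← V2o_congr_left hp2 hq2 hpq, ← hε] at hq'
  exact eq_of_I_mul_deriv_eq (hdiff p hp) (hdiff q hq) (heq p hp) hq' h₀

/-- Symmetry reduction for Algorithm 2: for every Algorithm-2 solution, all odd
amplitudes `c_p` with `3 ≤ p ≤ N−1` coincide, and all even amplitudes `c_p`
with `4 ≤ p ≤ N` coincide. -/
theorem algorithm2_symmetry_reduction
    (N : ℕ) (hN : 4 ≤ N) (hNeven : Even N) (E γ ω : ℝ) (hE : 0 < E)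
    (c : ℕ → ℝ → ℂ)
    (hdiff : ∀ p, Differentiable ℝ (c p))
    (heq : ∀ p, 1 ≤ p → p ≤ N → ∀ t : ℝ,
      Complex.I * deriv (c p) t =
        ((if p = 1 then (0 : ℝ) else E) : ℂ) * c p t +
          ∑ q ∈ Finset.Icc 1 N, V2o γ ω p q t * c q t)
    (hinit₂ : c 2 0 = 1)
    (hinit : ∀ p, p ≠ 2 → c p 0 = 0) :
    (∀ p q, 3 ≤ p → p ≤ N - 1 → 3 ≤ q → q ≤ N - 1 → Odd p → Odd q →
      ∀ t : ℝ, c p t = c q t) ∧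
    (∀ p q, 4 ≤ p → p ≤ N → 4 ≤ q → q ≤ N → Even p → Even q →
      ∀ t : ℝ, c p t = c q t) := by
  have amplitude_eq {p q : ℕ} (hp : 3 ≤ p) (hpN : p ≤ N) (hq : 3 ≤ q) (hqN : q ≤ N)
      (hpq : Even p ↔ Even q) : c p = c q :=
    algorithm2_symmetry_reduction_general (fun r _ => hdiff r)
      (fun r hr => heq r (Finset.mem_Icc.mp hr).1 (Finset.mem_Icc.mp hr).2)
      (Finset.mem_Icc.mpr ⟨by omega, hpN⟩) (Finset.mem_Icc.mpr ⟨by omega, hqN⟩)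
      (by omega) (by omega) hpq (by rw [if_neg (by omega), if_neg (by omega)])
      ((hinit p (by omega)).trans (hinit q (by omega)).symm)
  exact
    ⟨fun p q hp hpN hq hqN hp_odd hq_odd => congrFun <|
      amplitude_eq hp (by omega) hq (by omega)
        (iff_of_false (Nat.not_even_iff_odd.mpr hp_odd) (Nat.not_even_iff_odd.mpr hq_odd)),
    fun p q hp hpN hq hqN hp_even hq_even => congrFun <|
      amplitude_eq (by omega) hpN (by omega) hqN (iff_of_true hp_even hq_even)⟩
end

section
/- (Fourth-order equation for the ground-state amplitude of Algorithm 2.) For every Algorithm-2 reduced solution, the function b₁ is four times differentiable and satisfies, for all t ∈ ℝ: b₁⁗(t) + ((N−1)·γ² + ω²)·b₁″(t) + γ²·ω²·b₁(t) = 0. -/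
open Complex Real

/-!
In the rotating frame `c = e^{-iωt} b₃`, `d = e^{iωt} b₄` the coefficients become constant, and
`c' = b₁' - iωc`, `d' = b₁' + iωd` because `b₃'` and `b₄'` are phases times `b₁'`. Hence the sum
`s = c + d` satisfies `s'' = 2 b₁'' - ω² s`, while `b₁'' = -γ² b₁ - ((N - 2) / 2) γ² s`.
Differentiating the latter twice and eliminating `s` gives the equation for `b₁`.
-/

section Elimination

variable {𝕜 R E : Type*} [NontriviallyNormedField 𝕜] [NormedAddCommGroup E] [NormedSpace 𝕜 E]
  [CommRing R] [Module R E] [SMulCommClass 𝕜 R E] [ContinuousConstSMul R E]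

theorem fourth_order_ode_of_coupled_second_order {f f' s r : 𝕜 → E} {a κ η ν : R}
    (hf : ∀ t, HasDerivAt f (f' t) t)
    (hf' : ∀ t, HasDerivAt f' (-(a • f t) - κ • s t) t)
    (hs : ∀ t, HasDerivAt s (η • f' t - r t) t)
    (hr : ∀ t, HasDerivAt r (ν • s t) t) :
    Differentiable 𝕜 (deriv f) ∧
    Differentiable 𝕜 (deriv (deriv f)) ∧
    Differentiable 𝕜 (deriv (deriv (deriv f))) ∧
    ∀ t, deriv (deriv (deriv (deriv f))) t + (a + κ * η + ν) • deriv (deriv f) t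
      + (a * ν) • f t = 0 := by
  have deriv_f : deriv f = f' := deriv_eq hf
  have deriv_f' : deriv f' = fun t ↦ -(a • f t) - κ • s t := deriv_eq hf'
  have hf'' (t : 𝕜) : HasDerivAt (deriv f') (-(a • f' t) - κ • (η • f' t - r t)) t := by
    rw [deriv_f']
    exact ((hf t).const_smul a).neg.sub ((hs t).const_smul κ)
  have deriv_deriv_f' : deriv (deriv f') = fun t ↦ -(a • f' t) - κ • (η • f' t - r t) :=
    deriv_eq hf''
  have hf''' (t : 𝕜) : HasDerivAt (deriv (deriv f'))
      (-(a • deriv f' t) - κ • (η • deriv f' t - ν • s t)) t := by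
    rw [deriv_deriv_f', (hf' t).deriv]
    exact ((hf' t).const_smul a).neg.sub ((((hf' t).const_smul η).sub (hr t)).const_smul κ)
  rw [deriv_f]
  refine ⟨fun t ↦ (hf' t).differentiableAt, fun t ↦ (hf'' t).differentiableAt,
    fun t ↦ (hf''' t).differentiableAt, fun t ↦ ?_⟩
  rw [(hf''' t).deriv, (hf' t).deriv]
  module

end Elimination

theorem hasDerivAt_cexp_neg_mul_mul {g : ℝ → ℂ} {a x : ℂ} {t : ℝ}
    (hg : HasDerivAt g (cexp (a * t) * x) t) :
    HasDerivAt (fun u : ℝ ↦ cexp (-(a * u)) * g u) (x - a * (cexp (-(a * t)) * g t)) t := by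
  have hphase : HasDerivAt (fun u : ℝ ↦ cexp (-(a * u))) (cexp (-(a * t)) * -a) t := by
    simpa using ((ofRealCLM.hasDerivAt (x := t)).const_mul a).neg.cexp
  have hcancel : cexp (-(a * t)) * cexp (a * t) = 1 := by
    rw [← Complex.exp_add, neg_add_cancel, Complex.exp_zero]
  refine (hphase.mul hg).congr_deriv ?_
  linear_combination x * hcancel

/-- The reduced amplitude equations of Algorithm 2, with complex parameters. Differentiability is
recorded separately because `deriv` is `0` at points of non-differentiability. -/
structure IsReducedSolution (N γ ω : ℂ) (b₁ b₂ b₃ b₄ : ℝ → ℂ) : Prop where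
  differentiable₁ : Differentiable ℝ b₁
  differentiable₂ : Differentiable ℝ b₂
  differentiable₃ : Differentiable ℝ b₃
  differentiable₄ : Differentiable ℝ b₄
  I_mul_deriv₁ : ∀ t : ℝ, I * deriv b₁ t = γ * b₂ t
  I_mul_deriv₂ : ∀ t : ℝ, I * deriv b₂ t =
    γ * b₁ t + ((N - 2) / 2) * γ * (cexp (-(I * ω * t)) * b₃ t + cexp (I * ω * t) * b₄ t)
  I_mul_deriv₃ : ∀ t : ℝ, I * deriv b₃ t = γ * cexp (I * ω * t) * b₂ t
  I_mul_deriv₄ : ∀ t : ℝ, I * deriv b₄ t = γ * cexp (-(I * ω * t)) * b₂ t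

/-- The sum of the amplitudes `b₃`, `b₄` in the rotating frame; this is the combination that
drives `b₂`. -/
noncomputable def rotatingSum (ω : ℂ) (b₃ b₄ : ℝ → ℂ) (t : ℝ) : ℂ :=
  cexp (-(I * ω * t)) * b₃ t + cexp (I * ω * t) * b₄ t

/-- The difference of the amplitudes `b₃`, `b₄` in the rotating frame, which together with
`rotatingSum` and `b₁` closes the system. -/
noncomputable def rotatingDiff (ω : ℂ) (b₃ b₄ : ℝ → ℂ) (t : ℝ) : ℂ :=
  cexp (-(I * ω * t)) * b₃ t - cexp (I * ω * t) * b₄ t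

namespace IsReducedSolution

variable {N γ ω : ℂ} {b₁ b₂ b₃ b₄ : ℝ → ℂ}

theorem hasDerivAt_deriv_b₁ (h : IsReducedSolution N γ ω b₁ b₂ b₃ b₄) (t : ℝ) :
    HasDerivAt (deriv b₁)
      (-(γ ^ 2 * b₁ t) - (N - 2) / 2 * γ ^ 2 * rotatingSum ω b₃ b₄ t) t := by
  have deriv_b₁ : deriv b₁ = fun u ↦ -I * γ * b₂ u := by
    funext u
    linear_combination -I * h.I_mul_deriv₁ u + deriv b₁ u * I_mul_I
  rw [deriv_b₁]
  refine ((h.differentiable₂ t).hasDerivAt.const_mul (-I * γ)).congr_deriv ?_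
  rw [rotatingSum]
  linear_combination -γ * h.I_mul_deriv₂ t

theorem hasDerivAt_cexp_neg_mul_b₃ (h : IsReducedSolution N γ ω b₁ b₂ b₃ b₄) (t : ℝ) :
    HasDerivAt (fun u : ℝ ↦ cexp (-(I * ω * u)) * b₃ u)
      (deriv b₁ t - I * ω * (cexp (-(I * ω * t)) * b₃ t)) t := by
  have deriv_b₃ : deriv b₃ t = cexp (I * ω * t) * deriv b₁ t := by
    refine mul_left_cancel₀ I_ne_zero ?_
    linear_combination h.I_mul_deriv₃ t - cexp (I * ω * t) * h.I_mul_deriv₁ t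
  exact hasDerivAt_cexp_neg_mul_mul (deriv_b₃ ▸ (h.differentiable₃ t).hasDerivAt)

theorem swap (h : IsReducedSolution N γ ω b₁ b₂ b₃ b₄) :
    IsReducedSolution N γ (-ω) b₁ b₂ b₄ b₃ where
  differentiable₁ := h.differentiable₁
  differentiable₂ := h.differentiable₂
  differentiable₃ := h.differentiable₄
  differentiable₄ := h.differentiable₃
  I_mul_deriv₁ := h.I_mul_deriv₁
  I_mul_deriv₂ t := by
    simpa only [mul_neg, neg_mul, neg_neg, add_comm (cexp (I * ω * t) * b₄ t)]
      using h.I_mul_deriv₂ t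
  I_mul_deriv₃ t := by simpa only [mul_neg, neg_mul] using h.I_mul_deriv₄ t
  I_mul_deriv₄ t := by simpa only [mul_neg, neg_mul, neg_neg] using h.I_mul_deriv₃ t

theorem hasDerivAt_cexp_mul_b₄ (h : IsReducedSolution N γ ω b₁ b₂ b₃ b₄) (t : ℝ) :
    HasDerivAt (fun u : ℝ ↦ cexp (I * ω * u) * b₄ u)
      (deriv b₁ t + I * ω * (cexp (I * ω * t) * b₄ t)) t := by
  simpa only [mul_neg, neg_mul, neg_neg, sub_neg_eq_add] using h.swap.hasDerivAt_cexp_neg_mul_b₃ t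

theorem hasDerivAt_rotatingSum (h : IsReducedSolution N γ ω b₁ b₂ b₃ b₄) (t : ℝ) :
    HasDerivAt (rotatingSum ω b₃ b₄) (2 * deriv b₁ t - I * ω * rotatingDiff ω b₃ b₄ t) t := by
  refine ((h.hasDerivAt_cexp_neg_mul_b₃ t).add (h.hasDerivAt_cexp_mul_b₄ t)).congr_deriv ?_
  rw [rotatingDiff]
  ring

theorem hasDerivAt_rotatingDiff (h : IsReducedSolution N γ ω b₁ b₂ b₃ b₄) (t : ℝ) :
    HasDerivAt (rotatingDiff ω b₃ b₄) (-(I * ω * rotatingSum ω b₃ b₄ t)) t := by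
  refine ((h.hasDerivAt_cexp_neg_mul_b₃ t).sub (h.hasDerivAt_cexp_mul_b₄ t)).congr_deriv ?_
  rw [rotatingSum]
  ring

end IsReducedSolution

theorem algorithm2_fourth_order_ode_general {N γ ω : ℂ} {b₁ b₂ b₃ b₄ : ℝ → ℂ}
    (h : IsReducedSolution N γ ω b₁ b₂ b₃ b₄) :
    Differentiable ℝ (deriv b₁) ∧
    Differentiable ℝ (deriv (deriv b₁)) ∧
    Differentiable ℝ (deriv (deriv (deriv b₁))) ∧
    ∀ t : ℝ,
      deriv (deriv (deriv (deriv b₁))) t + ((N - 1) * γ ^ 2 + ω ^ 2) * deriv (deriv b₁) t +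
        γ ^ 2 * ω ^ 2 * b₁ t = 0 := by
  have hdiff (t : ℝ) : HasDerivAt (fun u ↦ I * ω * rotatingDiff ω b₃ b₄ u)
      (ω ^ 2 * rotatingSum ω b₃ b₄ t) t := by
    refine ((h.hasDerivAt_rotatingDiff t).const_mul (I * ω)).congr_deriv ?_
    linear_combination -ω ^ 2 * rotatingSum ω b₃ b₄ t * I_mul_I
  have hcoeff : γ ^ 2 + (N - 2) / 2 * γ ^ 2 * 2 + ω ^ 2 = (N - 1) * γ ^ 2 + ω ^ 2 := by ring
  simpa only [smul_eq_mul, hcoeff] using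
    fourth_order_ode_of_coupled_second_order (R := ℂ) (a := γ ^ 2) (κ := (N - 2) / 2 * γ ^ 2)
      (η := 2) (ν := ω ^ 2) (fun t ↦ (h.differentiable₁ t).hasDerivAt) h.hasDerivAt_deriv_b₁
      h.hasDerivAt_rotatingSum hdiff

/-- Fourth-order ODE for the ground-state amplitude of Algorithm 2: for every
Algorithm-2 reduced solution, `b₁` is four times differentiable and satisfies
`b₁⁗ + ((N−1)·γ² + ω²)·b₁″ + γ²·ω²·b₁ = 0`. -/
theorem algorithm2_fourth_order_ode
    (N : ℕ) (hN : 2 ≤ N) (γ ω : ℝ)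
    (b₁ b₂ b₃ b₄ : ℝ → ℂ)
    (hd₁ : Differentiable ℝ b₁) (hd₂ : Differentiable ℝ b₂)
    (hd₃ : Differentiable ℝ b₃) (hd₄ : Differentiable ℝ b₄)
    (heq₁ : ∀ t : ℝ, Complex.I * deriv b₁ t = (γ : ℂ) * b₂ t)
    (heq₂ : ∀ t : ℝ, Complex.I * deriv b₂ t =
      (γ : ℂ) * b₁ t +
        (((N : ℂ) - 2) / 2) * γ *
          (Complex.exp (-(Complex.I * ω * t)) * b₃ t +
            Complex.exp (Complex.I * ω * t) * b₄ t))
    (heq₃ : ∀ t : ℝ, Complex.I * deriv b₃ t =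
      (γ : ℂ) * Complex.exp (Complex.I * ω * t) * b₂ t)
    (heq₄ : ∀ t : ℝ, Complex.I * deriv b₄ t =
      (γ : ℂ) * Complex.exp (-(Complex.I * ω * t)) * b₂ t) :
    Differentiable ℝ (deriv b₁) ∧
    Differentiable ℝ (deriv (deriv b₁)) ∧
    Differentiable ℝ (deriv (deriv (deriv b₁))) ∧
    ∀ t : ℝ,
      deriv (deriv (deriv (deriv b₁))) t +
        (((N : ℂ) - 1) * γ ^ 2 + (ω : ℂ) ^ 2) * deriv (deriv b₁) t +
        (γ : ℂ) ^ 2 * (ω : ℂ) ^ 2 * b₁ t = 0 :=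
  algorithm2_fourth_order_ode_general ⟨hd₁, hd₂, hd₃, hd₄, heq₁, heq₂, heq₃, heq₄⟩
end

section
/- (Operator norm of the Algorithm-1 perturbation.) Let N ≥ 2 be an integer, j ∈ {1,…,N}, and γ, ω, t real numbers. The N×N complex matrix V_{[j,γ,ω]}(t), viewed as a linear operator on ℂ^N with the Euclidean norm, has operator norm equal to |γ|·√(N−1). -/
open Complex Real

open InnerProductSpace WithLp

/-! Writing `u` for the all-ones vector with its `j`-th entry replaced by `0`, the perturbation is
`a • u eⱼᴴ + b • eⱼ uᴴ`. Since `u ⟂ eⱼ`, the two rank-one summands have orthogonal ranges and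
orthogonal coimages, so the norm of the sum is the larger of the norms `‖a‖ ‖u‖` and `‖b‖ ‖u‖`,
where `‖u‖ = √(N - 1)`. -/

/-- The C⋆-identity reduces this to the self-adjoint elements `a⋆a` and `b⋆b`, whose product is
zero. -/
theorem norm_add_eq_max_of_star_mul_eq_zero {A : Type*} [NonUnitalCStarAlgebra A] {a b : A}
    (h_range : star a * b = 0) (h_coimage : a * star b = 0) :
    ‖a + b‖ = max ‖a‖ ‖b‖ := by
  have h_range' : star b * a = 0 := by rw [← star_eq_zero, star_mul, star_star, h_range]
  have h_mul : star a * a * (star b * b) = 0 := by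
    rw [mul_assoc, ← mul_assoc a, h_coimage, zero_mul, mul_zero]
  refine (sq_eq_sq₀ (by positivity) (by positivity)).1 ?_
  calc ‖a + b‖ ^ 2 = ‖star a * a + star b * b‖ := by
        rw [sq, ← CStarRing.norm_star_mul_self, star_add, add_mul, mul_add, mul_add, h_range,
          h_range', add_zero, zero_add]
    _ = max (‖a‖ ^ 2) (‖b‖ ^ 2) := by
        rw [(IsSelfAdjoint.star_mul_self a).norm_add_eq_max (.star_mul_self b) h_mul,
          CStarRing.norm_star_mul_self, CStarRing.norm_star_mul_self, sq, sq]
    _ = max ‖a‖ ‖b‖ ^ 2 :=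
        ((pow_left_monotoneOn (n := 2)).map_max (norm_nonneg a) (norm_nonneg b)).symm

theorem norm_rankOne_add_rankOne {E : Type*} [NormedAddCommGroup E] [InnerProductSpace ℂ E]
    [CompleteSpace E] {u v w x : E} (huw : inner ℂ u w = 0) (hvx : inner ℂ v x = 0) :
    ‖rankOne ℂ u v + rankOne ℂ w x‖ = max (‖u‖ * ‖v‖) (‖w‖ * ‖x‖) := by
  rw [norm_add_eq_max_of_star_mul_eq_zero, norm_rankOne, norm_rankOne]
  · simp [ContinuousLinearMap.star_eq_adjoint, ContinuousLinearMap.mul_def, rankOne_comp_rankOne,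
      huw]
  · simp [ContinuousLinearMap.star_eq_adjoint, ContinuousLinearMap.mul_def, rankOne_comp_rankOne,
      hvx]

theorem toEuclideanCLM_vecMulVec_star {𝕜 ι : Type*} [RCLike 𝕜] [Fintype ι] [DecidableEq ι]
    (u v : EuclideanSpace 𝕜 ι) :
    Matrix.toEuclideanCLM (𝕜 := 𝕜) (Matrix.vecMulVec u (star v)) = rankOne 𝕜 u v := by
  apply ContinuousLinearMap.coe_injective
  rw [Matrix.coe_toEuclideanCLM_eq_toEuclideanLin, ← symm_toEuclideanLin_rankOne,
    LinearEquiv.apply_symm_apply]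

section Perturbation

variable {ι : Type*} [DecidableEq ι]

/-- The Algorithm-1 perturbation with its two phases abstracted: off the diagonal, column `j` is
constantly `a` and row `j` is constantly `b`. The paper's `V_{[j,γ,ω]}(t)` is the case
`a = γ e^{iωt}`, `b = γ e^{-iωt}`. -/
def perturbationMatrix (j : ι) (a b : ℂ) : Matrix ι ι ℂ := fun p q =>
  if q = j ∧ p ≠ j then a else if p = j ∧ q ≠ j then b else 0

/-- The indicator vector of the complement of `j`: the direction to which the perturbation
couples the basis vector `eⱼ`. -/
noncomputable def onesOff (j : ι) : EuclideanSpace ℂ ι := toLp 2 fun p => if p = j then 0 else 1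

theorem perturbationMatrix_eq_vecMulVec_add_vecMulVec (j : ι) (a b : ℂ) :
    perturbationMatrix j a b =
      Matrix.vecMulVec (a • onesOff j) (star (EuclideanSpace.single j (1 : ℂ))) +
        Matrix.vecMulVec (EuclideanSpace.single j b) (star (onesOff j)) := by
  ext p q
  by_cases hp : p = j <;> by_cases hq : q = j <;>
    simp [perturbationMatrix, onesOff, Matrix.vecMulVec_apply, hp, hq]

variable [Fintype ι]

theorem inner_onesOff_single (j : ι) (a : ℂ) :
    inner ℂ (onesOff j) (EuclideanSpace.single j a) = 0 := by
  simp [onesOff, EuclideanSpace.inner_single_right]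

theorem norm_onesOff (j : ι) : ‖onesOff j‖ = √((Fintype.card ι : ℝ) - 1) := by
  have h_entry (p : ι) : ‖onesOff j p‖ ^ 2 = 1 - if p = j then 1 else 0 := by
    by_cases hp : p = j <;> simp [onesOff, hp]
  simp [EuclideanSpace.norm_eq, h_entry]

theorem toEuclideanCLM_perturbationMatrix (j : ι) (a b : ℂ) :
    Matrix.toEuclideanCLM (𝕜 := ℂ) (perturbationMatrix j a b) =
      rankOne ℂ (a • onesOff j) (EuclideanSpace.single j 1) +
        rankOne ℂ (EuclideanSpace.single j b) (onesOff j) := by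
  rw [perturbationMatrix_eq_vecMulVec_add_vecMulVec, map_add, toEuclideanCLM_vecMulVec_star,
    toEuclideanCLM_vecMulVec_star]

theorem algorithm1_perturbation_opNorm_general (j : ι) (a b : ℂ) :
    ‖Matrix.toEuclideanCLM (𝕜 := ℂ) (perturbationMatrix j a b)‖ =
      max ‖a‖ ‖b‖ * √((Fintype.card ι : ℝ) - 1) := by
  have h_orth := inner_onesOff_single j
  rw [toEuclideanCLM_perturbationMatrix, norm_rankOne_add_rankOne
    (by rw [inner_smul_left, h_orth, mul_zero]) (inner_eq_zero_symm.1 (h_orth 1))]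
  simp [norm_smul, norm_onesOff, max_mul_of_nonneg]

end Perturbation

/-- Operator norm of the Algorithm-1 perturbation: the `N×N` matrix
`V_{[j,γ,ω]}(t)`, viewed as an operator on `ℂ^N` with the Euclidean norm,
has operator norm `|γ|·√(N−1)`. -/
theorem algorithm1_perturbation_opNorm
    (N : ℕ) (hN : 2 ≤ N) (j : Fin N) (γ ω t : ℝ)
    (V : Matrix (Fin N) (Fin N) ℂ)
    (hV : V = fun p q =>
      if q = j ∧ p ≠ j then (γ : ℂ) * Complex.exp (Complex.I * ω * t)
      else if p = j ∧ q ≠ j then (γ : ℂ) * Complex.exp (-(Complex.I * ω * t))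
      else 0) :
    ‖Matrix.toEuclideanCLM (𝕜 := ℂ) V‖ = |γ| * Real.sqrt ((N : ℝ) - 1) := by
  have hV' : V = perturbationMatrix j (γ * Complex.exp (Complex.I * ω * t))
      (γ * Complex.exp (-(Complex.I * ω * t))) := hV
  rw [hV', algorithm1_perturbation_opNorm_general]
  simp [Complex.norm_exp]
end

section
/- (From the vanishing coefficients to Equation (mmf).) Let m ≥ 1 be a natural number and α, ω : {1,…,m} → ℝ with ω_j ≠ 0 for all j. If S₁ = 0 and S₂ = 0, then Σ_{j=1}^{m} α_j · ∏_{k ≠ j} ω_k² = 0. -/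
open Finset

/-! Write `P = ∏ ω_k`, `P_j = ∏_{k ≠ j} ω_k` and `P_{jk} = ∏_{l ≠ j, k} ω_l`. Since
`P_k * P_j = P * P_{jk}` for `k ≠ j`, multiplying `S₁ = ∑ α_j * P_j` by `∑ P_k` gives the diagonal
terms `∑ α_j * P_j ^ 2` plus `P * S₂`. -/

section

variable {ι R : Type*} [DecidableEq ι] {s : Finset ι}

theorem prod_erase_mul_prod_erase [CommMonoid R] {j k : ι} (hk : k ∈ s.erase j) (ω : ι → R) :
    (∏ l ∈ s.erase k, ω l) * ∏ l ∈ s.erase j, ω l =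
      (∏ l ∈ s, ω l) * ∏ l ∈ (s.erase j).erase k, ω l := by
  rw [← mul_prod_erase (s.erase j) ω hk, ← prod_erase_mul s ω (mem_of_mem_erase hk), mul_assoc]

variable [CommSemiring R]

theorem sum_prod_erase_mul_prod_erase {j : ι} (hj : j ∈ s) (ω : ι → R) :
    (∑ k ∈ s, ∏ l ∈ s.erase k, ω l) * ∏ l ∈ s.erase j, ω l =
      (∏ l ∈ s.erase j, ω l) ^ 2 +
        (∏ l ∈ s, ω l) * ∑ k ∈ s.erase j, ∏ l ∈ (s.erase j).erase k, ω l := by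
  rw [← add_sum_erase s _ hj, add_mul, ← sq, sum_mul, mul_sum]
  congr 1
  exact sum_congr rfl fun k hk => prod_erase_mul_prod_erase hk ω

theorem sum_prod_erase_mul_sum_mul_prod_erase (s : Finset ι) (α ω : ι → R) :
    (∑ k ∈ s, ∏ l ∈ s.erase k, ω l) * ∑ j ∈ s, α j * ∏ k ∈ s.erase j, ω k =
      ∑ j ∈ s, α j * ∏ k ∈ s.erase j, ω k ^ 2 +
        (∏ l ∈ s, ω l) * ∑ j ∈ s, α j * ∑ k ∈ s.erase j, ∏ l ∈ (s.erase j).erase k, ω l := by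
  simp only [mul_sum s, ← sum_add_distrib]
  refine sum_congr rfl fun j hj => ?_
  rw [mul_left_comm, sum_prod_erase_mul_prod_erase hj, prod_pow, mul_add, mul_left_comm (α j)]

theorem vanishing_coefficients_to_mmf_general (s : Finset ι) (α ω : ι → R)
    (hS₁ : ∑ j ∈ s, α j * ∏ k ∈ s.erase j, ω k = 0)
    (hS₂ : ∑ j ∈ s, α j * ∑ k ∈ s.erase j, ∏ l ∈ (s.erase j).erase k, ω l = 0) :
    ∑ j ∈ s, α j * ∏ k ∈ s.erase j, ω k ^ 2 = 0 := by
  have identity := sum_prod_erase_mul_sum_mul_prod_erase s α ω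
  rw [hS₁, hS₂, mul_zero, mul_zero, add_zero] at identity
  exact identity.symm

end

/-- From the vanishing coefficients to Equation (mmf): if
`S₁ = Σ_j α_j·∏_{k≠j} ω_k = 0` and `S₂ = Σ_j α_j·Σ_{k≠j} ∏_{l≠j,k} ω_l = 0`,
then `Σ_j α_j·∏_{k≠j} ω_k² = 0`. -/
theorem vanishing_coefficients_to_mmf
    (m : ℕ) (hm : 1 ≤ m) (α ω : Fin m → ℝ) (hω : ∀ j, ω j ≠ 0)
    (hS₁ : ∑ j : Fin m, α j * ∏ k ∈ Finset.univ.erase j, ω k = 0)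
    (hS₂ : ∑ j : Fin m, α j *
      ∑ k ∈ Finset.univ.erase j, ∏ l ∈ (Finset.univ.erase j).erase k, ω l = 0) :
    ∑ j : Fin m, α j * ∏ k ∈ Finset.univ.erase j, (ω k) ^ 2 = 0 :=
  vanishing_coefficients_to_mmf_general univ α ω hS₁ hS₂
end

section
/- (Algebraic core of Theorem 1: optimality of Algorithm 2.) Let m ≥ 1 be a natural number and α, ω : {1,…,m} → ℝ with α_j > 0 and ω_j ≠ 0 for all j. Then it is impossible that both S₁ = 0 and S₂ = 0. (Consequently, in the optimality analysis, the coefficients of s and s² in the numerator of Λ cannot both vanish, so the exponent gap d in ω_R satisfies d ≤ 2; since Algorithm 2 achieves d = 2, it is optimal.) -/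
open Finset

/-!
Put `Q(x) = ∏_k (x + ω_k)` and `P(x) = Σ_j α_j ∏_{k≠j} (x + ω_k)`, so that `S₁ = P(0)` and
`S₂ = P'(0)`. Since `P / Q = Σ_j α_j / (x + ω_j)`, differentiating and clearing denominators gives
`Q' P - Q P' = Σ_j α_j (∏_{k≠j} (x + ω_k))²`. At `x = 0` the left-hand side vanishes when
`S₁ = S₂ = 0`, whereas the right-hand side is positive.
-/

section Identities

variable {ι R : Type*} [DecidableEq ι] {s : Finset ι}

theorem prod_mul_prod_erase_erase [CommMonoid R] (ω : ι → R) {j k : ι} (hj : j ∈ s)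
    (hk : k ∈ s.erase j) :
    (∏ l ∈ s, ω l) * ∏ l ∈ (s.erase j).erase k, ω l =
      (∏ l ∈ s.erase j, ω l) * ∏ l ∈ s.erase k, ω l := by
  have hj' : j ∈ s.erase k := mem_erase.2 ⟨(ne_of_mem_erase hk).symm, hj⟩
  rw [← mul_prod_erase s ω hj, ← mul_prod_erase (s.erase k) ω hj', erase_right_comm (a := k)]
  ac_rfl

theorem prod_mul_sum_prod_erase_erase [CommRing R] (ω : ι → R) {j : ι} (hj : j ∈ s) :
    (∏ l ∈ s, ω l) * ∑ k ∈ s.erase j, ∏ l ∈ (s.erase j).erase k, ω l =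
      (∏ l ∈ s.erase j, ω l) * (∑ k ∈ s, ∏ l ∈ s.erase k, ω l - ∏ l ∈ s.erase j, ω l) := by
  rw [← sum_erase_eq_sub hj, mul_sum, mul_sum]
  exact sum_congr rfl fun k hk => prod_mul_prod_erase_erase ω hj hk

theorem sum_mul_prod_erase_sq [CommRing R] (s : Finset ι) (α ω : ι → R) :
    ∑ j ∈ s, α j * (∏ k ∈ s.erase j, ω k) ^ 2 =
      (∑ k ∈ s, ∏ l ∈ s.erase k, ω l) * (∑ j ∈ s, α j * ∏ k ∈ s.erase j, ω k) -
        (∏ l ∈ s, ω l) *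
          ∑ j ∈ s, α j * ∑ k ∈ s.erase j, ∏ l ∈ (s.erase j).erase k, ω l := by
  rw [mul_sum s _ (∑ k ∈ s, ∏ l ∈ s.erase k, ω l), mul_sum s _ (∏ l ∈ s, ω l),
    ← sum_sub_distrib]
  refine sum_congr rfl fun j hj => ?_
  rw [mul_left_comm (∏ l ∈ s, ω l), prod_mul_sum_prod_erase_erase ω hj]
  ring

end Identities

theorem sum_mul_prod_erase_sq_pos {ι R : Type*} [DecidableEq ι] [CommRing R] [LinearOrder R]
    [IsStrictOrderedRing R] {s : Finset ι} {α ω : ι → R} (hα : ∀ j ∈ s, 0 ≤ α j) {i : ι}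
    (hi : i ∈ s) (hαi : 0 < α i) (hω : ∀ k ∈ s.erase i, ω k ≠ 0) :
    0 < ∑ j ∈ s, α j * (∏ k ∈ s.erase j, ω k) ^ 2 :=
  sum_pos' (fun j hj => mul_nonneg (hα j hj) (sq_nonneg _))
    ⟨i, hi, mul_pos hαi (sq_pos_of_ne_zero (prod_ne_zero_iff.2 hω))⟩

theorem algorithm2_optimality_core_general {ι R : Type*} [DecidableEq ι] [CommRing R]
    [LinearOrder R] [IsStrictOrderedRing R] {s : Finset ι} {α ω : ι → R}
    (hα : ∀ j ∈ s, 0 ≤ α j) {i : ι} (hi : i ∈ s) (hαi : 0 < α i)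
    (hω : ∀ k ∈ s.erase i, ω k ≠ 0) :
    ¬ ((∑ j ∈ s, α j * ∏ k ∈ s.erase j, ω k = 0) ∧
       (∑ j ∈ s, α j * ∑ k ∈ s.erase j, ∏ l ∈ (s.erase j).erase k, ω l = 0)) := by
  rintro ⟨hS₁, hS₂⟩
  have hpos := sum_mul_prod_erase_sq_pos hα hi hαi hω
  rw [sum_mul_prod_erase_sq, hS₁, hS₂, mul_zero, mul_zero, sub_zero] at hpos
  exact hpos.false

/-- Algebraic core of Theorem 1 (optimality of Algorithm 2): if every `α_j > 0`
and every `ω_j ≠ 0`, then `S₁ = Σ_j α_j·∏_{k≠j} ω_k` and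
`S₂ = Σ_j α_j·Σ_{k≠j} ∏_{l≠j,k} ω_l` cannot both vanish. -/
theorem algorithm2_optimality_core
    (m : ℕ) (hm : 1 ≤ m) (α ω : Fin m → ℝ)
    (hα : ∀ j, 0 < α j) (hω : ∀ j, ω j ≠ 0) :
    ¬ ((∑ j : Fin m, α j * ∏ k ∈ Finset.univ.erase j, ω k = 0) ∧
       (∑ j : Fin m, α j *
         ∑ k ∈ Finset.univ.erase j,
           ∏ l ∈ (Finset.univ.erase j).erase k, ω l = 0)) :=
  algorithm2_optimality_core_general (fun j _ => (hα j).le) (mem_univ ⟨0, hm⟩) (hα _)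
    fun k _ => hω k
end
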